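/- arXiv:1201.2922 — 2 statements merged into one kernel-verified Lean document; each statement's English description precedes it below -/
import Mathlib

section
/- With F = x_0^{d_0} ⋯ x_n^{d_n}, 0 < d_0 ≤ ⋯ ≤ d_n, d = Σ d_i, a Waring decomposition F = ℓ_1^d + ⋯ + ℓ_r^d (r = R(F)), I the homogeneous vanishing ideal of {[ℓ_1],…,[ℓ_r]} in S = ℂ[α_0,…,α_n], and q_t = dim_ℂ(I_t ∩ α_0·S_{t−1}): for all integers t ≥ 0, dim_ℂ I_t = q_{t+1}. -/
/-! Everything rests on showing that no form `ℓ j` of a decomposition of this length has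
vanishing `x_0`-coefficient. Once this is known, `α_0` is a nonzerodivisor modulo `I`, so
`I_{t+1} ∩ α_0 S_t = α_0 I_t`, and multiplication by `α_0` is injective.

Comparing coefficients in `F = ∑ j, ℓ_j ^ |d|` (`coeff_linearForm_pow`) gives the moment
identities: for an exponent `b` with `|b| = |d|`, the sum `∑ j, ℓ_j ^ b` is nonzero if `b = d`
and zero otherwise. In other words, the apolar ideal of `F` is monomial. Now the
`∏_{i ≥ 1} (d_i + 1)` monomials `y ^ a`, `a_i ≤ d_i`, are linearly independent as functions on
the points `ℓ_j / ℓ_j(0)` with `ℓ_j(0) ≠ 0`: given a relation `∑ c_a y ^ a = 0`, choose `a*` with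
`c_{a*} ≠ 0` of maximal degree `e`, homogenize the relation to degree `e` with `x_0`, and multiply
by `x_0 ^ d_0 ∏_{i ≥ 1} x_i ^ (d_i - a*_i)`. Since `d_0 > 0`, the resulting form of degree `|d|`
vanishes at every `ℓ_j`, including those with `ℓ_j(0) = 0`, and summing over `j` isolates
`c_{a*}`, a contradiction. Hence at least `∏_{i ≥ 1} (d_i + 1) = r` of the `r` indices `j` satisfy
`ℓ_j(0) ≠ 0`. -/

open MvPolynomial

/-- The space `S_k` of homogeneous polynomials of degree `k` in `ℂ[α_0,…,α_n]`,
indexed by an integer `k` (with `S_k = 0` for `k < 0`). -/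
noncomputable def homZ (n : ℕ) (k : ℤ) : Submodule ℂ (MvPolynomial (Fin (n + 1)) ℂ) :=
  if 0 ≤ k then homogeneousSubmodule (Fin (n + 1)) ℂ k.toNat else ⊥

/-- The degree-`k` homogeneous component of an ideal, for an integer `k`. -/
noncomputable def idealZ {n : ℕ} (I : Ideal (MvPolynomial (Fin (n + 1)) ℂ)) (k : ℤ) :
    Submodule ℂ (MvPolynomial (Fin (n + 1)) ℂ) :=
  Submodule.restrictScalars ℂ I ⊓ homZ n k

/-- `q_t = dim(I_t ∩ α_0·S_{t−1})`, where `I` is the vanishing ideal of the points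
of a Waring decomposition. -/
noncomputable def qdim {n : ℕ} (I : Ideal (MvPolynomial (Fin (n + 1)) ℂ)) (t : ℤ) : ℕ :=
  Module.finrank ℂ
    ↥(idealZ I t ⊓ (homZ n (t - 1)).map (LinearMap.mulLeft ℂ (X 0)))

theorem coeff_linearForm_pow {n : ℕ} (v : Fin (n + 1) → ℂ) (D : ℕ) (b : Fin (n + 1) → ℕ)
    (hb : ∑ i, b i = D) :
    coeff (Finsupp.equivFunOnFinite.symm b)
      ((∑ i, C (v i) * X i : MvPolynomial (Fin (n + 1)) ℂ) ^ D)
      = (Nat.multinomial Finset.univ b : ℂ) * ∏ i, v i ^ b i := by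
  classical
  have hmon : ∀ k : Fin (n + 1) → ℕ,
      ((Nat.multinomial Finset.univ k : MvPolynomial (Fin (n + 1)) ℂ)
        * ∏ i, (C (v i) * X i) ^ k i)
      = monomial (Finsupp.equivFunOnFinite.symm k)
          ((Nat.multinomial Finset.univ k : ℂ) * ∏ i, v i ^ k i) := by
    intro k
    rw [monomial_eq, Finsupp.prod_fintype _ _ (by simp)]
    simp only [mul_pow, Finset.prod_mul_distrib, C_mul, map_prod, map_pow, map_natCast,
      Finsupp.equivFunOnFinite_symm_apply_apply]
    ring
  rw [Finset.sum_pow_eq_sum_piAntidiag, coeff_sum]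
  simp only [hmon, coeff_monomial, EmbeddingLike.apply_eq_iff_eq]
  rw [Finset.sum_ite_eq' , if_pos]
  simp [Finset.mem_piAntidiag, hb]

theorem coeff_prod_X_pow {n : ℕ} (d b : Fin (n + 1) → ℕ) :
    coeff (Finsupp.equivFunOnFinite.symm b)
      (∏ i, X i ^ d i : MvPolynomial (Fin (n + 1)) ℂ) = if b = d then 1 else 0 := by
  classical
  have : (∏ i, X i ^ d i : MvPolynomial (Fin (n + 1)) ℂ)
      = monomial (Finsupp.equivFunOnFinite.symm d) 1 := by
    rw [monomial_eq, Finsupp.prod_fintype _ _ (by simp)]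
    simp
  rw [this, coeff_monomial]
  simp only [EmbeddingLike.apply_eq_iff_eq, eq_comm]

/-- Moment identities: the power sums of the `ℓ j` along exponents of total degree `|d|` are
those of the monomial `x ^ d`, up to a multinomial factor. -/
theorem multinomial_mul_moment {n r : ℕ} (d : Fin (n + 1) → ℕ) (ℓ : Fin r → (Fin (n + 1) → ℂ))
    (hdec : (∏ i, X i ^ d i : MvPolynomial (Fin (n + 1)) ℂ)
        = ∑ j, (∑ i, C (ℓ j i) * X i) ^ (∑ i, d i))
    (b : Fin (n + 1) → ℕ) (hb : ∑ i, b i = ∑ i, d i) :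
    (Nat.multinomial Finset.univ b : ℂ) * ∑ j, ∏ i, ℓ j i ^ b i = if b = d then 1 else 0 := by
  rw [← coeff_prod_X_pow, hdec, coeff_sum, Finset.mul_sum]
  exact Finset.sum_congr rfl fun j _ => (coeff_linearForm_pow _ _ _ hb).symm

theorem moment_eq_zero {n r : ℕ} (d : Fin (n + 1) → ℕ) (ℓ : Fin r → (Fin (n + 1) → ℂ))
    (hdec : (∏ i, X i ^ d i : MvPolynomial (Fin (n + 1)) ℂ)
        = ∑ j, (∑ i, C (ℓ j i) * X i) ^ (∑ i, d i))
    (b : Fin (n + 1) → ℕ) (hb : ∑ i, b i = ∑ i, d i) (hne : b ≠ d) :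
    ∑ j, ∏ i, ℓ j i ^ b i = 0 := by
  have h := multinomial_mul_moment d ℓ hdec b hb
  rw [if_neg hne] at h
  exact (mul_eq_zero.mp h).resolve_left (Nat.cast_ne_zero.mpr (Nat.multinomial_pos _ _).ne')

theorem moment_ne_zero {n r : ℕ} (d : Fin (n + 1) → ℕ) (ℓ : Fin r → (Fin (n + 1) → ℂ))
    (hdec : (∏ i, X i ^ d i : MvPolynomial (Fin (n + 1)) ℂ)
        = ∑ j, (∑ i, C (ℓ j i) * X i) ^ (∑ i, d i)) :
    ∑ j, ∏ i, ℓ j i ^ d i ≠ 0 := by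
  intro h0
  have h := multinomial_mul_moment d ℓ hdec d rfl
  simp [h0] at h

/-- In any decomposition of `x ^ d`, the monomials `y ^ a` with `a_i ≤ d_i` are linearly
independent functions on the points off the hyperplane `x_0 = 0`, in the chart `x_0 = 1`. -/
theorem linearIndependent_monomials {n r : ℕ} (d : Fin (n + 1) → ℕ) (hpos : 0 < d 0)
    (ℓ : Fin r → (Fin (n + 1) → ℂ))
    (hdec : (∏ i, X i ^ d i : MvPolynomial (Fin (n + 1)) ℂ)
        = ∑ j, (∑ i, C (ℓ j i) * X i) ^ (∑ i, d i)) :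
    LinearIndependent ℂ (fun (a : ∀ i : Fin n, Fin (d i.succ + 1))
      (j : {j : Fin r // ℓ j 0 ≠ 0}) => ∏ i : Fin n, (ℓ j i.succ / ℓ j 0) ^ (a i : ℕ)) := by
  classical
  rw [Fintype.linearIndependent_iff]
  intro c hc
  by_contra! hex
  obtain ⟨a₀, ha₀⟩ := hex
  obtain ⟨m, hm, hmax⟩ := (Finset.univ.filter fun a => c a ≠ 0).exists_max_image
    (fun a => ∑ i, (a i : ℕ)) ⟨a₀, by simpa using ha₀⟩
  have hcm : c m ≠ 0 := by simpa using hm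
  have hle : ∀ a, c a ≠ 0 → ∑ i, (a i : ℕ) ≤ ∑ i, (m i : ℕ) := fun a ha =>
    hmax a (by simpa using ha)
  -- exponent of the homogenized monomial times `x_0 ^ d_0 ∏ x_i ^ (d_i - m_i)`
  let b : (∀ i : Fin n, Fin (d i.succ + 1)) → Fin (n + 1) → ℕ := fun a =>
    Fin.cons (d 0 + (∑ i, (m i : ℕ) - ∑ i, (a i : ℕ)))
      (fun i => (a i : ℕ) + (d i.succ - (m i : ℕ)))
  have hbsum : ∀ a, c a ≠ 0 → ∑ i, b a i = ∑ i, d i := by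
    intro a ha
    have h1 := hle a ha
    have h2 : ∑ i : Fin n, (d i.succ - (m i : ℕ)) + ∑ i, (m i : ℕ) = ∑ i : Fin n, d i.succ := by
      rw [← Finset.sum_add_distrib]
      exact Finset.sum_congr rfl fun i _ => by have := (m i).isLt; omega
    rw [Fin.sum_univ_succ, Fin.sum_univ_succ]
    simp only [b, Fin.cons_zero, Fin.cons_succ, Finset.sum_add_distrib]
    omega
  have hbm : b m = d := by
    funext i
    refine Fin.cases ?_ (fun i => ?_) i
    · simp [b]
    · have := (m i).isLt
      simp only [b, Fin.cons_succ]
      omega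
  have hbinj : ∀ a, a ≠ m → b a ≠ d := by
    intro a ha h
    apply ha
    funext i
    have h1 := congrFun h i.succ
    have := (m i).isLt
    simp only [b, Fin.cons_succ] at h1
    apply Fin.ext
    omega
  have hvan : ∀ j, ∑ a, c a * ∏ i, ℓ j i ^ b a i = 0 := by
    intro j
    by_cases hj : ℓ j 0 = 0
    · refine Finset.sum_eq_zero fun a _ => ?_
      rw [Fin.prod_univ_succ, hj, zero_pow (by simp [b]; omega)]
      ring
    · have h := congrFun hc ⟨j, hj⟩
      simp only [Finset.sum_apply, Pi.smul_apply, smul_eq_mul, Pi.zero_apply] at h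
      have key : ∀ a, c a * ∏ i, ℓ j i ^ b a i
          = (ℓ j 0 ^ (d 0 + ∑ i, (m i : ℕ)) * ∏ i : Fin n, ℓ j i.succ ^ (d i.succ - (m i : ℕ)))
            * (c a * ∏ i : Fin n, (ℓ j i.succ / ℓ j 0) ^ (a i : ℕ)) := by
        intro a
        by_cases ha : c a = 0
        · simp [ha]
        have h1 : d 0 + ∑ i, (m i : ℕ)
            = (d 0 + (∑ i, (m i : ℕ) - ∑ i, (a i : ℕ))) + ∑ i, (a i : ℕ) := by
          have := hle a ha
          omega
        rw [Fin.prod_univ_succ, h1, pow_add (ℓ j 0) _ (∑ i, (a i : ℕ))]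
        simp only [b, Fin.cons_zero, Fin.cons_succ, div_pow, Finset.prod_div_distrib, pow_add,
          Finset.prod_mul_distrib, Finset.prod_pow_eq_pow_sum]
        field_simp
      rw [Finset.sum_congr rfl fun a _ => key a, ← Finset.mul_sum, h, mul_zero]
  have htot : ∑ a, c a * ∑ j, ∏ i, ℓ j i ^ b a i = 0 := by
    simp only [Finset.mul_sum]
    rw [Finset.sum_comm]
    exact Finset.sum_eq_zero fun j _ => hvan j
  rw [Finset.sum_eq_single m] at htot
  · rw [hbm] at htot
    exact mul_ne_zero hcm (moment_ne_zero d ℓ hdec) htot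
  · intro a _ ham
    by_cases ha : c a = 0
    · simp [ha]
    · rw [moment_eq_zero d ℓ hdec _ (hbsum a ha) (hbinj a ham), mul_zero]
  · simp

theorem coord_zero_ne_zero {n : ℕ} (d : Fin (n + 1) → ℕ) (hpos : 0 < d 0)
    (r : ℕ) (hr : r = ∏ i ∈ Finset.univ.erase 0, (d i + 1))
    (ℓ : Fin r → (Fin (n + 1) → ℂ))
    (hdec : (∏ i, X i ^ d i : MvPolynomial (Fin (n + 1)) ℂ)
        = ∑ j, (∑ i, C (ℓ j i) * X i) ^ (∑ i, d i)) (j : Fin r) : ℓ j 0 ≠ 0 := by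
  classical
  intro hj
  have h := (linearIndependent_monomials d hpos ℓ hdec).fintype_card_le_finrank
  have hr' : r = ∏ i : Fin n, (d i.succ + 1) := by
    have h1 := Finset.mul_prod_erase Finset.univ (fun i => d i + 1) (Finset.mem_univ 0)
    rw [Fin.prod_univ_succ, ← hr] at h1
    exact Nat.eq_of_mul_eq_mul_left (Nat.succ_pos _) h1
  have hlt : Fintype.card {j : Fin r // ℓ j 0 ≠ 0} < Fintype.card (Fin r) :=
    Fintype.card_subtype_lt (x := j) (by simpa using hj)
  rw [Module.finrank_fintype_fun_eq_card] at h
  simp only [Fintype.card_pi, Fintype.card_fin] at h hlt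
  omega

/-- For the vanishing ideal `I` of a Waring decomposition of the monomial
`x_0^{d_0} ⋯ x_n^{d_n}`: for all `t ≥ 0`, `dim I_t = q_{t+1}`. -/
theorem dim_I_eq_q_succ (n : ℕ) (hn : 1 ≤ n)
    (d : Fin (n + 1) → ℕ) (hmono : Monotone d) (hpos : 0 < d 0)
    (r : ℕ) (hr : r = ∏ i ∈ Finset.univ.erase 0, (d i + 1))
    (ℓ : Fin r → (Fin (n + 1) → ℂ))
    (hdec : (∏ i, X i ^ d i : MvPolynomial (Fin (n + 1)) ℂ)
        = ∑ j, (∑ i, C (ℓ j i) * X i) ^ (∑ i, d i))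
    (hmin : IsLeast {s : ℕ | ∃ m : Fin s → (Fin (n + 1) → ℂ),
        (∏ i, X i ^ d i : MvPolynomial (Fin (n + 1)) ℂ)
          = ∑ j, (∑ i, C (m j i) * X i) ^ (∑ i, d i)} r)
    (I : Ideal (MvPolynomial (Fin (n + 1)) ℂ))
    (hI : ∀ p : MvPolynomial (Fin (n + 1)) ℂ,
      p ∈ I ↔ ∀ (j : Fin r) (c : ℂ), c ≠ 0 → eval (fun i => c * ℓ j i) p = 0) :
    ∀ t : ℤ, 0 ≤ t → Module.finrank ℂ (idealZ I t) = qdim I (t + 1) := by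
  intro t ht
  have hne := coord_zero_ne_zero d hpos r hr ℓ hdec
  have hinj : Function.Injective
      (LinearMap.mulLeft ℂ (X 0 : MvPolynomial (Fin (n + 1)) ℂ)) :=
    fun p q h => mul_left_cancel₀ (X_ne_zero 0) h
  have hcolon : idealZ I (t + 1) ⊓
      (homZ n (t + 1 - 1)).map (LinearMap.mulLeft ℂ (X 0)) =
      (idealZ I t).map (LinearMap.mulLeft ℂ (X 0)) := by
    rw [add_sub_cancel_right]
    ext p
    constructor
    · rintro ⟨⟨hpI, -⟩, q, hq, rfl⟩
      refine ⟨q, ⟨?_, hq⟩, rfl⟩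
      refine (hI q).2 fun j c hc => ?_
      have h := (hI _).1 hpI j c hc
      simp only [LinearMap.mulLeft_apply, map_mul, eval_X] at h
      exact (mul_eq_zero.mp h).resolve_left (mul_ne_zero hc (hne j))
    · rintro ⟨q, ⟨hqI, hq⟩, rfl⟩
      refine ⟨⟨I.mul_mem_left _ hqI, ?_⟩, q, hq, rfl⟩
      simp only [homZ, ht, show 0 ≤ t + 1 by omega, if_true, SetLike.mem_coe,
        mem_homogeneousSubmodule, LinearMap.mulLeft_apply] at hq ⊢
      rw [show (t + 1).toNat = 1 + t.toNat by omega]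
      exact (isHomogeneous_X ℂ 0).mul hq
  rw [qdim, hcolon]
  exact (Submodule.equivMapOfInjective _ hinj _).finrank_eq
end

section
/- Let F = x_0^{d_0} ⋯ x_n^{d_n} with 0 < d_0 ≤ ⋯ ≤ d_n, d = Σ d_i, let F = ℓ_1^d + ⋯ + ℓ_r^d be a Waring decomposition (r = R(F)), let I ⊂ S = ℂ[α_0,…,α_n] be the homogeneous vanishing ideal of {[ℓ_1],…,[ℓ_r]} ⊂ ℙ^n, and let J = (α_1^{d_1+1},…,α_n^{d_n+1}). Then there exists a UNIQUE tuple (φ_1,…,φ_n) of homogeneous polynomials with deg φ_i = d_i − d_0 such that (i) no monomial appearing with nonzero coefficient in any φ_i lies in J (equivalently, no such monomial is divisible by α_j^{d_j+1} for any j ∈ {1,…,n}), and (ii) I is generated by α_1^{d_1+1} − φ_1 α_0^{d_0+1}, …, α_n^{d_n+1} − φ_n α_0^{d_0+1}. -/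
open MvPolynomial

/-!
Write `F = ∏ X_i ^ d_i` and call a homogeneous polynomial *normal* if none of its monomials is
divisible by some `α_j ^ (d_j + 1)` with `1 ≤ j`.

Comparing coefficients in `F = ∑ ℓ_j ^ d` shows that, on forms of degree `d = ∑ d_i`, the functional
`p ↦ ∑_j p(ℓ_j)` is a nonzero multiple of the coefficient of `α^(d_0,…,d_n)`. Multiplying by
monomials, a form vanishing at all the `ℓ_j` has zero coefficient at every monomial dividing
`α^(d_0,…,d_n)` (`apolar`); this is the inclusion `I ⊆ F^⊥`.

It follows that a normal form `p` for which `α_0 p` vanishes at all the points is zero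
(`NF_eq_zero`): the `α_0`-free monomials `m` of `p` would give monomials `α_0 m` dividing
`α^(d_0,…,d_n)` in `α_0 p`, so `p` is divisible by `α_0`, and one divides and repeats. The normal
monomials of degree `d` are at least `∏_{i ≥ 1} (d_i + 1) = r` in number, so by this injectivity
`p ↦ (ℓ_j(0) p(ℓ_j))_j` maps the normal forms of degree `d` onto `ℂ^r` (`NF_surj`). Thus no point
lies on `α_0 = 0`, and `α_i ^ (d_i + 1) α_0 ^ k` agrees on the points with a normal form for large
`k`; by `apolar` that normal form is divisible by `α_0 ^ k`, and what remains is divisible by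
`α_0 ^ (d_0 + 1)`. This produces `φ_i` (`exists_normal_form`).

The binomial-type generators rewrite every form to a normal one of the same degree (`reduce`), and
`I` is homogeneous and contains no nonzero normal form. Hence the generators span `I`, and the `φ_i`
are unique because the difference of two choices, times `α_0 ^ (d_0 + 1)`, is a normal form in `I`.
-/

/-! ### Apolarity -/

lemma coeff_linear_pow {N : ℕ} (a : Fin N → ℂ) (D : ℕ) (m : Fin N →₀ ℕ) (hm : m.degree = D) :
    coeff m ((∑ i, C (a i) * X i : MvPolynomial (Fin N) ℂ) ^ D)
      = (Nat.multinomial Finset.univ m : ℂ) * ∏ i, a i ^ m i := by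
  have key : ∀ k : Fin N → ℕ, ((Nat.multinomial Finset.univ k : MvPolynomial (Fin N) ℂ)
      * ∏ i, (C (a i) * X i) ^ k i)
      = monomial (Finsupp.equivFunOnFinite.symm k)
        ((Nat.multinomial Finset.univ k : ℂ) * ∏ i, a i ^ k i) := by
    intro k
    rw [monomial_eq, Finsupp.prod_fintype _ _ (by simp)]
    simp [mul_pow, Finset.prod_mul_distrib, mul_assoc]
  rw [Finset.sum_pow_eq_sum_piAntidiag]
  simp_rw [key]
  rw [coeff_sum, Finset.sum_eq_single (m : Fin N → ℕ)]
  · simp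
  · intro k _ hk
    rw [coeff_monomial, if_neg]
    rintro rfl
    exact hk rfl
  · intro h
    refine absurd ?_ h
    simp [← hm, Finsupp.degree_eq_sum]

/-- On forms of degree `∑ d_i`, the functional `p ↦ ∑_j p(ℓ_j)` is a nonzero multiple of the
coefficient of the monomial with exponent `d`; so that coefficient vanishes if `p` does on the
points. -/
lemma apolar_functional {N r : ℕ} (d : Fin N → ℕ) (ℓ : Fin r → Fin N → ℂ)
    (hdec : (∏ i, X i ^ d i : MvPolynomial (Fin N) ℂ)
        = ∑ j, (∑ i, C (ℓ j i) * X i) ^ (∑ i, d i))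
    (p : MvPolynomial (Fin N) ℂ) (hp : p.IsHomogeneous (∑ i, d i))
    (h0 : ∀ j, eval (ℓ j) p = 0) :
    coeff (Finsupp.equivFunOnFinite.symm d) p = 0 := by
  have hmon : (∏ i, X i ^ d i : MvPolynomial (Fin N) ℂ)
      = monomial (Finsupp.equivFunOnFinite.symm d) 1 := by
    rw [monomial_eq, Finsupp.prod_fintype _ _ (by simp)]; simp
  -- The power moments of the points: this is `hdec` read coefficient by coefficient.
  have hmom : ∀ m : Fin N →₀ ℕ, m.degree = ∑ i, d i →
      (Nat.multinomial Finset.univ m : ℂ) * ∑ j, ∏ i, ℓ j i ^ m i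
        = if Finsupp.equivFunOnFinite.symm d = m then 1 else 0 := by
    intro m hm
    rw [← coeff_monomial, ← hmon, hdec, coeff_sum, Finset.mul_sum]
    exact Finset.sum_congr rfl fun j _ => (coeff_linear_pow _ _ _ hm).symm
  have hne : ∀ m : Fin N →₀ ℕ, (Nat.multinomial Finset.univ m : ℂ) ≠ 0 := fun m => by
    exact_mod_cast (Nat.multinomial_pos _ _).ne'
  by_contra hc
  have hs : ∑ j, eval (ℓ j) p
      = coeff (Finsupp.equivFunOnFinite.symm d) p * ∑ j, ∏ i, ℓ j i ^ d i := by
    simp_rw [eval_eq']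
    rw [Finset.sum_comm, Finset.sum_eq_single (Finsupp.equivFunOnFinite.symm d)]
    · simp [Finset.mul_sum]
    · intro m hm hmd
      rw [← Finset.mul_sum]
      have hdeg : m.degree = ∑ i, d i := by
        by_contra hx
        exact (mem_support_iff.1 hm) (hp.coeff_eq_zero hx)
      have := hmom m hdeg
      rw [if_neg (Ne.symm hmd)] at this
      rw [(mul_eq_zero.1 this).resolve_left (hne m), mul_zero]
    · intro h; simp [notMem_support_iff.1 h]
  simp only [h0, Finset.sum_const_zero] at hs
  have h1 := hmom (Finsupp.equivFunOnFinite.symm d) (by simp [Finsupp.degree_eq_sum])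
  simp only [Finsupp.coe_equivFunOnFinite_symm, if_true] at h1
  rw [(mul_eq_zero.1 hs.symm).resolve_left hc] at h1
  simp at h1

/-- The vanishing ideal of the points lies in the apolar ideal `F^⊥ = (α_i ^ (d_i + 1))_{i ≥ 0}`:
a form vanishing on the points involves no monomial dividing the one with exponent `d`. -/
lemma apolar {N r : ℕ} (d : Fin N → ℕ) (ℓ : Fin r → Fin N → ℂ)
    (hdec : (∏ i, X i ^ d i : MvPolynomial (Fin N) ℂ)
        = ∑ j, (∑ i, C (ℓ j i) * X i) ^ (∑ i, d i))
    {e : ℕ} (p : MvPolynomial (Fin N) ℂ) (hp : p.IsHomogeneous e)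
    (h0 : ∀ j, eval (ℓ j) p = 0) (m : Fin N →₀ ℕ) (hm : ∀ i, m i ≤ d i) :
    coeff m p = 0 := by
  by_cases hme : m.degree = e
  swap
  · exact hp.coeff_eq_zero hme
  set D : Fin N →₀ ℕ := Finsupp.equivFunOnFinite.symm d with hD
  have hle : m ≤ D := fun i => by simpa [hD] using hm i
  have hadd : D - m + m = D := tsub_add_cancel_of_le hle
  have hdD : D.degree = ∑ i, d i := by simp [hD, Finsupp.degree_eq_sum]
  -- Multiplying by `monomial (D - m) 1` moves the coefficient at `m` to the one at `D`.
  have := apolar_functional d ℓ hdec (monomial (D - m) 1 * p)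
    (by
      have hD' : (D - m).degree + e = ∑ i, d i := by rw [← hdD, ← hme, ← map_add, hadd]
      rw [← hD']
      exact (isHomogeneous_monomial _ rfl).mul hp)
    (fun j => by rw [map_mul, h0, mul_zero])
  rw [← hD] at this
  have h2 := coeff_monomial_mul m (D - m) (1 : ℂ) p
  rw [hadd, this, one_mul] at h2
  exact h2.symm

/-! ### Normal forms -/

/-- The space of normal forms of degree `e`: homogeneous polynomials of degree `e`, zero included,
none of whose monomials is divisible by `α_j ^ (d_j + 1)` for some `1 ≤ j ≤ n`. The exponent of
`α_0` is unrestricted. -/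
def NF {n : ℕ} (d : Fin (n + 1) → ℕ) (e : ℕ) : Submodule ℂ (MvPolynomial (Fin (n + 1)) ℂ) where
  carrier := {p | ∀ m, coeff m p ≠ 0 → m.degree = e ∧ ∀ j : Fin n, m j.succ ≤ d j.succ}
  zero_mem' := by simp
  add_mem' := by
    intro p q hp hq m hm
    by_cases h : coeff m p = 0
    · exact hq m (by simpa [h] using hm)
    · exact hp m h
  smul_mem' := by
    intro c p hp m hm
    exact hp m (fun h => hm (by simp [h]))

section
variable {n : ℕ} {d : Fin (n + 1) → ℕ}

lemma mem_NF {e : ℕ} {p : MvPolynomial (Fin (n + 1)) ℂ} :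
    p ∈ NF d e ↔ ∀ m, coeff m p ≠ 0 → m.degree = e ∧ ∀ j : Fin n, m j.succ ≤ d j.succ :=
  Iff.rfl

lemma NF.isHomogeneous {e : ℕ} {p : MvPolynomial (Fin (n + 1)) ℂ} (hp : p ∈ NF d e) :
    p.IsHomogeneous e := by
  intro m hm
  rw [← (hp m hm).1, Finsupp.degree_eq_weight_one]; rfl

lemma monomial_mem_NF {m : Fin (n + 1) →₀ ℕ} {e : ℕ} (c : ℂ) (he : m.degree = e)
    (hm : ∀ j : Fin n, m j.succ ≤ d j.succ) : monomial m c ∈ NF d e := by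
  intro m' h
  rw [coeff_monomial] at h
  obtain rfl : m = m' := by by_contra hne; simp [hne] at h
  exact ⟨he, hm⟩

lemma X_pow_mul_mem_NF {e : ℕ} {p : MvPolynomial (Fin (n + 1)) ℂ} (hp : p ∈ NF d e) (k : ℕ) :
    p * X 0 ^ k ∈ NF d (e + k) := by
  intro m hm
  rw [X_pow_eq_monomial, coeff_mul_monomial'] at hm
  split_ifs at hm with hle
  swap
  · simp at hm
  rw [mul_one] at hm
  obtain ⟨h1, h2⟩ := hp _ hm
  refine ⟨?_, fun j => ?_⟩
  · rw [← tsub_add_cancel_of_le hle, map_add, h1]; simp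
  · simpa using h2 j

lemma exists_eq_mul_X_pow {e k : ℕ} {p : MvPolynomial (Fin (n + 1)) ℂ} (hp : p ∈ NF d e)
    (hk : ∀ m, coeff m p ≠ 0 → k ≤ m 0) :
    ∃ q ∈ NF d (e - k), p = q * X 0 ^ k := by
  have h0 : p = divMonomial p (Finsupp.single 0 k) * X 0 ^ k := by
    ext m
    rw [X_pow_eq_monomial, coeff_mul_monomial']
    split_ifs with h
    · rw [coeff_divMonomial, add_tsub_cancel_of_le h, mul_one]
    · by_contra hc
      exact h (Finsupp.single_le_iff.2 (hk m hc))
  refine ⟨_, fun m hm => ?_, h0⟩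
  rw [coeff_divMonomial] at hm
  obtain ⟨h1, h2⟩ := hp _ hm
  refine ⟨?_, fun j => ?_⟩
  · rw [← h1]; simp
  · simpa using h2 j

variable {r : ℕ} {ℓ : Fin r → Fin (n + 1) → ℂ}

/-- A normal form `p` such that `α_0 p` vanishes on the points is zero. The factor `α_0` discards the
points on the hyperplane `α_0 = 0`, which are not yet known to be absent. -/
lemma NF_eq_zero (hpos : 0 < d 0)
    (hdec : (∏ i, X i ^ d i : MvPolynomial (Fin (n + 1)) ℂ)
        = ∑ j, (∑ i, C (ℓ j i) * X i) ^ (∑ i, d i))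
    (e : ℕ) (p : MvPolynomial (Fin (n + 1)) ℂ) (hp : p ∈ NF d e)
    (h0 : ∀ j, ℓ j 0 * eval (ℓ j) p = 0) : p = 0 := by
  -- `apolar` for `p * X 0` excludes the monomials of `p` without `X 0`, because `1 ≤ d 0`; then
  -- `X 0` divides `p` and the degree drops.
  induction e generalizing p with
  | zero =>
    ext m
    rw [coeff_zero]
    by_contra hc
    have hd := (hp m hc).1
    have := apolar d ℓ hdec (p * X 0 ^ 1) (NF.isHomogeneous (X_pow_mul_mem_NF hp 1))
      (fun j => by simp [← h0 j, mul_comm]) (m + Finsupp.single 0 1) (fun i => by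
        have : m = 0 := (Finsupp.degree_eq_zero_iff m).1 hd
        by_cases hi : i = 0
        · subst hi; simp [this]; omega
        · simp [this, Ne.symm hi])
    rw [pow_one, coeff_mul_X] at this
    exact hc this
  | succ e ih =>
    have hk : ∀ m, coeff m p ≠ 0 → 1 ≤ m 0 := by
      intro m hc
      by_contra hm
      have hm0 : m 0 = 0 := by omega
      have := apolar d ℓ hdec (p * X 0 ^ 1) (NF.isHomogeneous (X_pow_mul_mem_NF hp 1))
        (fun j => by simp [← h0 j, mul_comm]) (m + Finsupp.single 0 1) (fun i => by
          refine Fin.cases ?_ (fun j => ?_) i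
          · simp [hm0]; omega
          · simpa using (hp m hc).2 j)
      rw [pow_one, coeff_mul_X] at this
      exact hc this
    obtain ⟨q, hq, rfl⟩ := exists_eq_mul_X_pow hp hk
    rw [ih q hq, zero_mul]
    intro j
    have := h0 j
    simp only [map_mul, pow_one, eval_X] at this
    by_contra hne
    rcases mul_ne_zero_iff.1 hne with ⟨h1, h2⟩
    exact mul_ne_zero h1 (mul_ne_zero h2 h1) this

/-- Evaluation of `α_0 p` on the points, for `p` normal of degree `∑ d_i`, is onto `ℂ ^ r`: it is
injective on a subspace of dimension `∏_{i ≥ 1} (d_i + 1) = r`. -/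
lemma NF_surj (hpos : 0 < d 0)
    (hr : r = ∏ i ∈ Finset.univ.erase 0, (d i + 1))
    (hdec : (∏ i, X i ^ d i : MvPolynomial (Fin (n + 1)) ℂ)
        = ∑ j, (∑ i, C (ℓ j i) * X i) ^ (∑ i, d i)) (v : Fin r → ℂ) :
    ∃ p ∈ NF d (∑ i, d i), ∀ j, ℓ j 0 * eval (ℓ j) p = v j := by
  -- `B` indexes the normal monomials in `α_1, …, α_n`, and `ex` homogenizes them with `α_0` to
  -- degree `∑ d i`; the natural-number subtraction there does not truncate, as `b i ≤ d i.succ`.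
  let B := (i : Fin n) → Fin (d i.succ + 1)
  let ex : B → (Fin (n + 1) →₀ ℕ) := fun b => Finsupp.equivFunOnFinite.symm
    (Fin.cons (∑ i, d i - ∑ i, (b i : ℕ)) fun i => (b i : ℕ))
  have hexs : ∀ b (i : Fin n), ex b i.succ = b i := fun b i => by simp [ex]
  have hexinj : Function.Injective ex := by
    intro b b' h
    funext i
    apply Fin.ext
    rw [← hexs, ← hexs, h]
  have hmem : ∀ b, monomial (ex b) (1 : ℂ) ∈ NF d (∑ i, d i) := by
    intro b
    refine monomial_mem_NF 1 ?_ fun j => ?_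
    · have : ∑ i, (b i : ℕ) ≤ ∑ i : Fin n, d i.succ :=
        Finset.sum_le_sum fun i _ => Nat.le_of_lt_succ (b i).2
      rw [Finsupp.degree_eq_sum, Fin.sum_univ_succ]
      simp_rw [hexs]
      have h2 := Fin.sum_univ_succ d
      simp only [ex, Finsupp.coe_equivFunOnFinite_symm, Fin.cons_zero]
      omega
    · rw [hexs]; exact Nat.le_of_lt_succ (b j).2
  let P : (B → ℂ) →ₗ[ℂ] MvPolynomial (Fin (n + 1)) ℂ :=
    Fintype.linearCombination ℂ (fun b => monomial (ex b) (1 : ℂ))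
  have hP : ∀ c, P c = ∑ b, c b • monomial (ex b) (1 : ℂ) := fun c =>
    Fintype.linearCombination_apply ..
  have hPmem : ∀ c, P c ∈ NF d (∑ i, d i) := by
    intro c
    rw [hP]
    exact Submodule.sum_mem _ fun b _ => Submodule.smul_mem _ _ (hmem b)
  let L : (B → ℂ) →ₗ[ℂ] (Fin r → ℂ) :=
    LinearMap.pi fun j => ℓ j 0 • (aeval (R := ℂ) (ℓ j)).toLinearMap ∘ₗ P
  have hL : ∀ c j, L c j = ℓ j 0 * eval (ℓ j) (P c) := fun c j => by
    simp [L, aeval_eq_eval]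
  have hinj : Function.Injective L := by
    rw [← LinearMap.ker_eq_bot, LinearMap.ker_eq_bot']
    intro c hc
    have hz := NF_eq_zero hpos hdec _ (P c) (hPmem c) fun j => by rw [← hL, hc]; rfl
    funext b
    have := congrArg (coeff (ex b)) hz
    rw [hP, coeff_sum, Finset.sum_eq_single b] at this
    · simpa using this
    · intro b' _ hb
      simp [coeff_monomial, hexinj.ne hb]
    · simp
  have hcard : Module.finrank ℂ (B → ℂ) = Module.finrank ℂ (Fin r → ℂ) := by
    rw [Module.finrank_fintype_fun_eq_card, Module.finrank_fintype_fun_eq_card, Fintype.card_fin,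
      hr, Fintype.card_pi]
    have h1 : (d 0 + 1) * ∏ i ∈ Finset.univ.erase 0, (d i + 1)
        = (d 0 + 1) * ∏ i : Fin n, (d i.succ + 1) := by
      rw [Finset.mul_prod_erase Finset.univ (fun i => d i + 1) (Finset.mem_univ _),
        Fin.prod_univ_succ]
    simpa using (Nat.eq_of_mul_eq_mul_left (Nat.succ_pos _) h1).symm
  obtain ⟨c, hc⟩ := (LinearMap.injective_iff_surjective_of_finrank_eq_finrank hcard).1 hinj v
  exact ⟨P c, hPmem c, fun j => by rw [← hL, hc]⟩

/-- For each `i` there is a normal form `φ` of degree `d_i - d_0` such that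
`α_i ^ (d_i + 1) - φ α_0 ^ (d_0 + 1)` vanishes on the points. -/
lemma exists_normal_form (hpos : 0 < d 0)
    (hr : r = ∏ i ∈ Finset.univ.erase 0, (d i + 1))
    (hdec : (∏ i, X i ^ d i : MvPolynomial (Fin (n + 1)) ℂ)
        = ∑ j, (∑ i, C (ℓ j i) * X i) ^ (∑ i, d i)) (i : Fin n) :
    ∃ φ ∈ NF d (d i.succ - d 0), ∀ j, eval (ℓ j)
      (X i.succ ^ (d i.succ + 1) - φ * X 0 ^ (d 0 + 1)) = 0 := by
  have hℓ : ∀ j, ℓ j 0 ≠ 0 := by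
    intro j hj
    obtain ⟨p, -, hp⟩ := NF_surj hpos hr hdec 1
    simpa [hj] using hp j
  have hcoeff : ∀ (k : ℕ) (m : Fin (n + 1) →₀ ℕ), m i.succ ≤ d i.succ →
      coeff m (X i.succ ^ (d i.succ + 1) * X 0 ^ k : MvPolynomial (Fin (n + 1)) ℂ) = 0 := by
    intro k m hm
    rw [X_pow_eq_monomial, X_pow_eq_monomial, monomial_mul, coeff_monomial, if_neg]
    rintro rfl
    simp at hm
  -- Common factors `X 0` can be cancelled: by `apolar` the normal form is divisible by `X 0` as
  -- soon as `X i.succ ^ (d i.succ + 1) * X 0 ^ k` is, and `X 0` has no zero among the points.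
  have descend : ∀ k, ∀ Q ∈ NF d (d i.succ + 1 + k),
      (∀ j, eval (ℓ j) (X i.succ ^ (d i.succ + 1) * X 0 ^ k - Q) = 0) →
      ∃ Q ∈ NF d (d i.succ + 1), ∀ j, eval (ℓ j) (X i.succ ^ (d i.succ + 1) - Q) = 0 := by
    intro k
    induction k with
    | zero => intro Q hQ h; exact ⟨Q, hQ, by simpa using h⟩
    | succ k ih =>
      intro Q hQ h
      obtain ⟨q, hq, rfl⟩ := exists_eq_mul_X_pow (k := 1) hQ (by
        intro m hc
        by_contra hm
        have := apolar d ℓ hdec _ (((isHomogeneous_X_pow i.succ (d i.succ + 1)).mul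
          (isHomogeneous_X_pow 0 (k + 1))).sub (NF.isHomogeneous hQ)) h m (fun i => by
            refine Fin.cases ?_ (fun j => (hQ m hc).2 j) i
            omega)
        rw [coeff_sub, hcoeff _ _ ((hQ m hc).2 i), zero_sub, neg_eq_zero] at this
        exact hc this)
      refine ih q hq fun j => ?_
      have := h j
      have h2 : eval (ℓ j) (X i.succ ^ (d i.succ + 1) * X 0 ^ k - q) * ℓ j 0 = 0 := by
        rw [← this]; simp; ring
      exact (mul_eq_zero.1 h2).resolve_right (hℓ j)
  have hdi : d i.succ ≤ ∑ i, d i :=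
    Finset.single_le_sum (f := d) (fun _ _ => Nat.zero_le _) (Finset.mem_univ _)
  obtain ⟨p, hp, hpe⟩ := NF_surj hpos hr hdec
    fun j => eval (ℓ j) (X i.succ ^ (d i.succ + 1) * X 0 ^ (∑ i, d i - d i.succ))
  obtain ⟨Q, hQ, hQe⟩ := descend (∑ i, d i - d i.succ) (p * X 0 ^ 1)
    (by
      have := X_pow_mul_mem_NF hp 1
      rwa [show ∑ i, d i + 1 = d i.succ + 1 + (∑ i, d i - d i.succ) by omega] at this)
    (fun j => by
      rw [map_sub, ← hpe]; simp; ring)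
  obtain ⟨q, hq, rfl⟩ := exists_eq_mul_X_pow (k := d 0 + 1) hQ (by
    intro m hc
    by_contra hm
    have := apolar d ℓ hdec _ ((isHomogeneous_X_pow i.succ (d i.succ + 1)).sub
      (NF.isHomogeneous hQ)) hQe m (fun i => by
        refine Fin.cases ?_ (fun j => (hQ m hc).2 j) i
        omega)
    have h2 := hcoeff 0 m ((hQ m hc).2 i)
    rw [pow_zero, mul_one] at h2
    rw [coeff_sub, h2, zero_sub, neg_eq_zero] at this
    exact hc this)
  exact ⟨q, by simpa using hq, hQe⟩

/-! ### Division by the generators and homogeneity of the vanishing ideal -/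

/-- Modulo an ideal containing all `α_i ^ (d_i + 1) - φ_i α_0 ^ (d_0 + 1)`, every form is congruent to
a normal form of the same degree. A monomial that is not normal is congruent to `α_0` times a form of
smaller degree, which is normalized by induction. -/
lemma reduce (hmono : Monotone d) (φ : Fin n → MvPolynomial (Fin (n + 1)) ℂ)
    (hφ : ∀ i, (φ i).IsHomogeneous (d i.succ - d 0))
    (K : Ideal (MvPolynomial (Fin (n + 1)) ℂ))
    (hK : ∀ i : Fin n, X i.succ ^ (d i.succ + 1) - φ i * X 0 ^ (d 0 + 1) ∈ K)
    (e : ℕ) (f : MvPolynomial (Fin (n + 1)) ℂ) (hf : f.IsHomogeneous e) :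
    ∃ g ∈ NF d e, f - g ∈ K := by
  suffices h : f ∈ NF d e ⊔ K.restrictScalars ℂ by
    obtain ⟨g, hg, k, hk, rfl⟩ := Submodule.mem_sup.1 h
    exact ⟨g, hg, by simpa using hk⟩
  induction e generalizing f with
  | zero =>
    refine Submodule.mem_sup_left fun m hm => ?_
    have h0 : m.degree = 0 := by
      by_contra h; exact hm (hf.coeff_eq_zero h)
    have : m = 0 := (Finsupp.degree_eq_zero_iff m).1 h0
    subst this
    simp
  | succ e ih =>
    rw [f.as_sum]
    refine Submodule.sum_mem _ fun m hm => ?_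
    have hdeg : m.degree = e + 1 := by
      by_contra h; exact (mem_support_iff.1 hm) (hf.coeff_eq_zero h)
    generalize coeff m f = c
    by_cases hn : ∀ j : Fin n, m j.succ ≤ d j.succ
    · exact Submodule.mem_sup_left (monomial_mem_NF c hdeg hn)
    push Not at hn
    obtain ⟨i, hi⟩ := hn
    obtain ⟨m', rfl⟩ := exists_add_of_le (show Finsupp.single i.succ (d i.succ + 1) ≤ m from
      Finsupp.single_le_iff.2 hi)
    have hd0 : d 0 ≤ d i.succ := hmono (Fin.zero_le _)
    have hm' : d i.succ + 1 + m'.degree = e + 1 := by simpa using hdeg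
    obtain ⟨g, hg, k, hk, hgk⟩ := Submodule.mem_sup.1
      (ih (φ i * X 0 ^ d 0 * monomial m' c) (by
        have := ((hφ i).mul (isHomogeneous_X_pow 0 (d 0))).mul
          (isHomogeneous_monomial (R := ℂ) (d := m') c rfl)
        rwa [show d i.succ - d 0 + d 0 + m'.degree = e by omega] at this))
    have hsplit : monomial (Finsupp.single i.succ (d i.succ + 1) + m') c
        = g * X 0 ^ 1 + (k * X 0 + (X i.succ ^ (d i.succ + 1) - φ i * X 0 ^ (d 0 + 1))
            * monomial m' c) := by
      have : monomial (Finsupp.single i.succ (d i.succ + 1) + m') c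
          = X i.succ ^ (d i.succ + 1) * monomial m' c := by
        rw [X_pow_eq_monomial, monomial_mul, one_mul]
      rw [this, pow_succ (X 0) (d 0)]
      linear_combination (- X 0) * hgk
    rw [hsplit]
    exact Submodule.add_mem_sup (X_pow_mul_mem_NF hg 1)
      (K.add_mem (K.mul_mem_right _ hk) (K.mul_mem_right _ (hK i)))

lemma eval_smul_homog {N e : ℕ} {p : MvPolynomial (Fin N) ℂ} (hp : p.IsHomogeneous e) (c : ℂ)
    (a : Fin N → ℂ) : eval (fun i => c * a i) p = c ^ e * eval a p := by
  rw [eval_eq', eval_eq', Finset.mul_sum]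
  refine Finset.sum_congr rfl fun m hm => ?_
  have : m.degree = e := by
    by_contra h; exact (mem_support_iff.1 hm) (hp.coeff_eq_zero h)
  simp_rw [mul_pow]
  rw [Finset.prod_mul_distrib, Finset.prod_pow_eq_pow_sum, ← Finsupp.degree_eq_sum, this]
  ring

/-- If `p` vanishes at all nonzero multiples of `a`, then so do its homogeneous components at `a`:
their values are the coefficients of the polynomial `c ↦ p(c a)`. -/
lemma component_vanish {N : ℕ} (p : MvPolynomial (Fin N) ℂ) (a : Fin N → ℂ)
    (h : ∀ c : ℂ, c ≠ 0 → eval (fun i => c * a i) p = 0) (e : ℕ) :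
    eval a (homogeneousComponent e p) = 0 := by
  by_cases he : p.totalDegree < e
  · rw [homogeneousComponent_eq_zero _ _ he, map_zero]
  let q : Polynomial ℂ := ∑ e ∈ Finset.range (p.totalDegree + 1),
    Polynomial.monomial e (eval a (homogeneousComponent e p))
  have hq : q = 0 := by
    refine Polynomial.eq_zero_of_infinite_isRoot _ (Set.Infinite.mono (s := {0}ᶜ) ?_
      (Set.finite_singleton 0).infinite_compl)
    intro c hc
    have := h c hc
    rw [← sum_homogeneousComponent p, map_sum] at this
    simp only [Set.mem_ofPred_eq, Polynomial.IsRoot, q, Polynomial.eval_finsetSum,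
      Polynomial.eval_monomial]
    rw [← this]
    refine Finset.sum_congr rfl fun k _ => ?_
    rw [eval_smul_homog (homogeneousComponent_isHomogeneous k p), mul_comm]
  have := congrArg (Polynomial.coeff · e) hq
  simpa [q, Polynomial.finsetSum_coeff, Polynomial.coeff_monomial, Nat.lt_succ_iff.2 (not_lt.1 he)] using this

end

/-! ### The normalized generators -/

/-- Unique normal form for the generators of the vanishing ideal `I` of a Waring
decomposition of the monomial `x_0^{d_0} ⋯ x_n^{d_n}`: there is a unique tuple
`(φ_1,…,φ_n)` of homogeneous polynomials with `deg φ_i = d_i − d_0`, none of whose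
monomials is divisible by any `α_j^{d_j+1}` (`1 ≤ j ≤ n`), such that `I` is generated by
`α_1^{d_1+1} − φ_1 α_0^{d_0+1}, …, α_n^{d_n+1} − φ_n α_0^{d_0+1}`. -/
theorem unique_normalized_generators (n : ℕ) (hn : 1 ≤ n)
    (d : Fin (n + 1) → ℕ) (hmono : Monotone d) (hpos : 0 < d 0)
    (r : ℕ) (hr : r = ∏ i ∈ Finset.univ.erase 0, (d i + 1))
    (ℓ : Fin r → (Fin (n + 1) → ℂ))
    (hdec : (∏ i, X i ^ d i : MvPolynomial (Fin (n + 1)) ℂ)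
        = ∑ j, (∑ i, C (ℓ j i) * X i) ^ (∑ i, d i))
    (hmin : IsLeast {s : ℕ | ∃ m : Fin s → (Fin (n + 1) → ℂ),
        (∏ i, X i ^ d i : MvPolynomial (Fin (n + 1)) ℂ)
          = ∑ j, (∑ i, C (m j i) * X i) ^ (∑ i, d i)} r)
    (I : Ideal (MvPolynomial (Fin (n + 1)) ℂ))
    (hI : ∀ p : MvPolynomial (Fin (n + 1)) ℂ,
      p ∈ I ↔ ∀ (j : Fin r) (c : ℂ), c ≠ 0 → eval (fun i => c * ℓ j i) p = 0) :
    ∃! φ : Fin n → MvPolynomial (Fin (n + 1)) ℂ,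
      (∀ i : Fin n, (φ i).IsHomogeneous (d i.succ - d 0)) ∧
      (∀ (i : Fin n), ∀ m ∈ (φ i).support, ∀ j : Fin n, m j.succ < d j.succ + 1) ∧
      I = Ideal.span (Set.range fun i : Fin n =>
        X i.succ ^ (d i.succ + 1) - φ i * X 0 ^ (d 0 + 1)) := by
  have hIhom : ∀ {e : ℕ} {p : MvPolynomial (Fin (n + 1)) ℂ}, p.IsHomogeneous e →
      (p ∈ I ↔ ∀ j, eval (ℓ j) p = 0) := by
    intro e p hp
    rw [hI]
    refine ⟨fun h j => by simpa using h j 1 one_ne_zero, fun h j c _ => ?_⟩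
    rw [eval_smul_homog hp, h, mul_zero]
  have hcomp : ∀ p ∈ I, ∀ e, homogeneousComponent e p ∈ I := fun p hp e =>
    (hIhom (homogeneousComponent_isHomogeneous e p)).2 fun j =>
      component_vanish p (ℓ j) ((hI p).1 hp j) e
  have hzero : ∀ {e : ℕ} {p : MvPolynomial (Fin (n + 1)) ℂ}, p ∈ NF d e → p ∈ I → p = 0 :=
    fun hp hpI => NF_eq_zero hpos hdec _ _ hp fun j => by
      rw [(hIhom (NF.isHomogeneous hp)).1 hpI j, mul_zero]
  have hd0 : ∀ i : Fin n, d 0 ≤ d i.succ := fun i => hmono (Fin.zero_le _)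
  choose φ hφ hφe using exists_normal_form hpos hr hdec
  have hgen : ∀ i : Fin n, X i.succ ^ (d i.succ + 1) - φ i * X 0 ^ (d 0 + 1) ∈ I := by
    intro i
    refine (hIhom (e := d i.succ + 1) ((isHomogeneous_X_pow _ _).sub ?_)).2 (hφe i)
    have := (NF.isHomogeneous (hφ i)).mul (isHomogeneous_X_pow (R := ℂ) 0 (d 0 + 1))
    have hd := hd0 i
    rwa [show d i.succ - d 0 + (d 0 + 1) = d i.succ + 1 by omega] at this
  refine ⟨φ, ⟨fun i => NF.isHomogeneous (hφ i), fun i m hm j =>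
    Nat.lt_succ_of_le ((hφ i m (mem_support_iff.1 hm)).2 j), ?_⟩, ?_⟩
  · have hle : Ideal.span (Set.range fun i : Fin n =>
        X i.succ ^ (d i.succ + 1) - φ i * X 0 ^ (d 0 + 1)) ≤ I := by
      rw [Ideal.span_le]
      rintro _ ⟨i, rfl⟩
      exact hgen i
    refine le_antisymm (fun p hp => ?_) hle
    rw [← sum_homogeneousComponent p]
    refine Ideal.sum_mem _ fun e _ => ?_
    obtain ⟨g, hg, hfg⟩ := reduce hmono φ (fun i => NF.isHomogeneous (hφ i))
      (Ideal.span (Set.range fun i : Fin n =>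
        X i.succ ^ (d i.succ + 1) - φ i * X 0 ^ (d 0 + 1)))
      (fun i => Ideal.subset_span ⟨i, rfl⟩) e _ (homogeneousComponent_isHomogeneous e p)
    have hgI : g ∈ I := by
      have := I.sub_mem (hcomp p hp e) (hle hfg)
      simpa using this
    simpa [hzero hg hgI] using hfg
  · rintro ψ ⟨h1, h2, h3⟩
    funext i
    have hψ : ψ i ∈ NF d (d i.succ - d 0) := by
      intro m hm
      refine ⟨?_, fun j => Nat.le_of_lt_succ (h2 i m (mem_support_iff.2 hm) j)⟩
      by_contra h
      exact hm ((h1 i).coeff_eq_zero h)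
    have hψI : X i.succ ^ (d i.succ + 1) - ψ i * X 0 ^ (d 0 + 1) ∈ I := by
      rw [h3]; exact Ideal.subset_span ⟨i, rfl⟩
    have hdiff : (ψ i - φ i) * X 0 ^ (d 0 + 1) = 0 := by
      refine hzero (X_pow_mul_mem_NF (Submodule.sub_mem _ hψ (hφ i)) _) ?_
      have := I.sub_mem (hgen i) hψI
      convert this using 1
      ring
    exact sub_eq_zero.1 ((mul_eq_zero.1 hdiff).resolve_right (pow_ne_zero _ (X_ne_zero _)))
end
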